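/- Consider the diversity-preserving UCB algorithm run on a bandit problem ν whose arm distributions all belong to D_{[0,1]}, where P is a finite polytope and at least one p ∈ Ext(P) satisfies Δ(p) > 0. If p★_min(ν) > 0, i.e. every optimal mixed action puts positive probability on every arm, then the regret is bounded: lim_{T→∞} R_T(ν) < +∞. -/

import Mathlib

/-!
The regret is at most the expected number of suboptimal rounds, so it suffices that
`P(round t + 1 is suboptimal)` is summable in `t`.

Three facts carry the argument. Let `c` be the smallest positive coordinate of a point of `ExtP`
and `L = 8 log t / Δ²`.

* *Concentration* (`measureReal_concFail_le`): the exponential supermartingale coming from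
  Hoeffding's lemma, used for each possible value of `N_a(t)`, shows that some empirical mean leaves
  its confidence interval at time `t` with probability at most `2 K / t³`.
* *Selection* (`exists_under_of_subopt`): when all means are in their confidence intervals, a
  suboptimal round puts mass at least `c` on some arm that was pulled at most `L` times.
* *Exploration* (`measureReal_underCount_ge_le`): it is exponentially unlikely that linearly many
  rounds up to `t` give probability at least `c` to an arm pulled at most `L` times before.

They combine as follows (`exists_underCount_ge`). Suppose that round `t + 1` is suboptimal and that
the means are concentrated at all times in `[t/2, t]`. Selection at round `t + 1` gives an arm `a`
with `N_a(t) ≤ L`. Optimal mixed actions charge *every* arm, so each optimal round `s ≤ t` gives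
mass at least `c` to `a`, an arm with `N_a(s - 1) ≤ L`; each suboptimal round of `(t/2, t]` does the
same for some arm, by selection. By pigeonhole a single arm occurs in at least `t / (4 K)`
rounds, which is the exploration event. Hence the probability is at most
`16 K / t² + K e t^k e^{-r t}` with `r > 0`, which is summable.

All conditional expectations are handled through integrals of nonnegative functions against
history-measurable weights, so no regular conditional distribution on `Ω` is needed.
-/

open MeasureTheory Finset

noncomputable section

namespace DivBanditUCB

/-- The inner product `⟨p, q⟩ = ∑ a p_a q_a` on `ℝ^K`. -/
def dot {K : ℕ} (p q : Fin K → ℝ) : ℝ := ∑ a, p a * q a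

/-- `N_a(t)`: the number of times arm `a` was pulled during rounds `1, …, t`. -/
def pulls {Ω : Type*} {K : ℕ} (A : ℕ → Ω → Fin K) (a : Fin K) (t : ℕ) (ω : Ω) : ℕ :=
  ∑ s ∈ Finset.Icc 1 t, if A s ω = a then 1 else 0

/-- `μ̂_a(t)`: the empirical mean of the rewards obtained when arm `a` was played,
with the convention `μ̂_a(t) = 1` when `N_a(t) = 0`. -/
def empMean {Ω : Type*} {K : ℕ} (A : ℕ → Ω → Fin K) (Y : ℕ → Ω → ℝ) (a : Fin K) (t : ℕ)
    (ω : Ω) : ℝ :=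
  if pulls A a t ω = 0 then 1
  else (∑ s ∈ Finset.Icc 1 t, if A s ω = a then Y s ω else 0) / (pulls A a t ω : ℝ)

/-- The upper confidence bound `U_a(t) = μ̂_a(t) + sqrt(2 log t / max{N_a(t), 1})`,
with `U_a(0) = 1`. -/
def ucbIndex {Ω : Type*} {K : ℕ} (A : ℕ → Ω → Fin K) (Y : ℕ → Ω → ℝ) (a : Fin K) (t : ℕ)
    (ω : Ω) : ℝ :=
  if t = 0 then 1
  else empMean A Y a t ω + Real.sqrt (2 * Real.log t / (max (pulls A a t ω) 1 : ℕ))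

/-- The σ-algebra generated by the history `A_1, Y_1, …, A_t, Y_t`. -/
def hist {Ω : Type*} {K : ℕ} (A : ℕ → Ω → Fin K) (Y : ℕ → Ω → ℝ) (t : ℕ) :
    MeasurableSpace Ω :=
  ⨆ s ∈ Set.Icc 1 t,
    (MeasurableSpace.comap (A s) inferInstance ⊔ MeasurableSpace.comap (Y s) inferInstance)

/-! ### Integrating against the conditional laws of the arm and of the reward -/

/-- A conditional probability `P[S | m] = g` may be integrated against any nonnegative
`m`-measurable function: the measures `1_S P` and `g P` have the same trace on `m`. -/
lemma setLIntegral_eq_of_condExp {Ω : Type*} {m m0 : MeasurableSpace Ω} (hm : m ≤ m0)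
    (P : Measure[m0] Ω) [IsProbabilityMeasure P] {S : Set Ω} (hS : MeasurableSet S)
    {g : Ω → ℝ} (hg : Measurable g) (hg0 : ∀ ω, 0 ≤ g ω)
    (h : P[S.indicator (fun _ => (1 : ℝ)) | m] =ᵐ[P] g)
    {Z : Ω → ENNReal} (hZ : Measurable[m] Z) :
    ∫⁻ ω in S, Z ω ∂P = ∫⁻ ω, Z ω * ENNReal.ofReal (g ω) ∂P := by
  have hinteg : Integrable (S.indicator (fun _ => (1 : ℝ))) P :=
    (integrable_const (1 : ℝ)).indicator hS
  have hgint : Integrable g P := integrable_condExp.congr h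
  have hgE : Measurable fun ω => ENNReal.ofReal (g ω) := hg.ennreal_ofReal
  have key : (P.restrict S).trim hm = (P.withDensity fun ω => ENNReal.ofReal (g ω)).trim hm := by
    refine @Measure.ext _ m _ _ fun B hB => ?_
    rw [trim_measurableSet_eq hm hB, trim_measurableSet_eq hm hB, Measure.restrict_apply (hm B hB),
      withDensity_apply _ (hm B hB),
      ← ofReal_integral_eq_lintegral_ofReal hgint.integrableOn (ae_of_all _ hg0),
      ← setIntegral_congr_ae (hm B hB) (h.mono fun x hx _ => hx), setIntegral_condExp hm hinteg hB,
      setIntegral_indicator hS]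
    simp [Set.inter_comm]
  rw [← lintegral_trim hm hZ, key, lintegral_trim hm hZ,
    lintegral_withDensity_eq_lintegral_mul _ hgE (hZ.mono hm le_rfl)]
  simp [mul_comm]

lemma hist_le {Ω : Type*} [m0 : MeasurableSpace Ω] {K : ℕ} {A : ℕ → Ω → Fin K} {Y : ℕ → Ω → ℝ}
    (hA : ∀ t, Measurable (A t)) (hY : ∀ t, Measurable (Y t)) (t : ℕ) : hist A Y t ≤ m0 :=
  iSup₂_le fun s _ => sup_le (hA s).comap_le (hY s).comap_le

lemma hist_mono {Ω : Type*} {K : ℕ} {A : ℕ → Ω → Fin K} {Y : ℕ → Ω → ℝ} {s t : ℕ} (h : s ≤ t) :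
    hist A Y s ≤ hist A Y t :=
  biSup_mono fun _ hr => ⟨hr.1, hr.2.trans h⟩

lemma measurable_arm_hist {Ω : Type*} {K : ℕ} {A : ℕ → Ω → Fin K} {Y : ℕ → Ω → ℝ} {s t : ℕ}
    (h1 : 1 ≤ s) (h : s ≤ t) : Measurable[hist A Y t] (A s) := by
  have : MeasurableSpace.comap (A s) inferInstance ≤ hist A Y t :=
    le_sup_left.trans (le_iSup₂_of_le (f := fun s (_ : s ∈ Set.Icc 1 t) =>
      (MeasurableSpace.comap (A s) inferInstance ⊔ MeasurableSpace.comap (Y s) inferInstance))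
      s ⟨h1, h⟩ le_rfl)
  exact Measurable.of_comap_le this

lemma measurable_reward_hist {Ω : Type*} {K : ℕ} {A : ℕ → Ω → Fin K} {Y : ℕ → Ω → ℝ} {s t : ℕ}
    (h1 : 1 ≤ s) (h : s ≤ t) : Measurable[hist A Y t] (Y s) := by
  have : MeasurableSpace.comap (Y s) inferInstance ≤ hist A Y t :=
    le_sup_right.trans (le_iSup₂_of_le (f := fun s (_ : s ∈ Set.Icc 1 t) =>
      (MeasurableSpace.comap (A s) inferInstance ⊔ MeasurableSpace.comap (Y s) inferInstance))
      s ⟨h1, h⟩ le_rfl)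
  exact Measurable.of_comap_le this

lemma measurable_pulls_hist {Ω : Type*} {K : ℕ} {A : ℕ → Ω → Fin K} {Y : ℕ → Ω → ℝ} (a : Fin K)
    (t : ℕ) : Measurable[hist A Y t] (pulls A a t) := by
  unfold pulls
  refine Finset.measurable_fun_sum _ fun s hs => ?_
  rw [Finset.mem_Icc] at hs
  exact Measurable.ite (measurable_arm_hist hs.1 hs.2 (measurableSet_singleton a))
    measurable_const measurable_const

/-- Given the past, `A_t` has law `p_t`. -/
lemma lintegral_mul_arm {Ω : Type*} [MeasurableSpace Ω] {K : ℕ}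
    (P : Measure Ω) [IsProbabilityMeasure P]
    (p : ℕ → Ω → Fin K → ℝ) (A : ℕ → Ω → Fin K) (Y : ℕ → Ω → ℝ)
    (hA : ∀ t, Measurable (A t)) (hY : ∀ t, Measurable (Y t))
    (hpmeas : ∀ t, 1 ≤ t → Measurable[hist A Y (t - 1)] (p t))
    (hp0 : ∀ t, 1 ≤ t → ∀ ω a, 0 ≤ p t ω a)
    (harm : ∀ t, 1 ≤ t → ∀ a : Fin K,
      (P[({ω | A t ω = a}).indicator (fun _ => (1 : ℝ)) | hist A Y (t - 1)])
        =ᵐ[P] fun ω => p t ω a)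
    {t : ℕ} (ht : 1 ≤ t) (g : Fin K → ENNReal)
    {Z : Ω → ENNReal} (hZ : Measurable[hist A Y (t - 1)] Z) :
    ∫⁻ ω, Z ω * g (A t ω) ∂P = ∫⁻ ω, Z ω * ∑ b, g b * ENNReal.ofReal (p t ω b) ∂P := by
  have hle := hist_le hA hY (t - 1)
  have hZ' : Measurable Z := hZ.mono hle le_rfl
  have hpm : ∀ b, Measurable fun ω => p t ω b := fun b =>
    (measurable_pi_apply b).comp ((hpmeas t ht).mono hle le_rfl)
  have hZp : ∀ b, Measurable fun ω => Z ω * ENNReal.ofReal (p t ω b) := fun b =>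
    hZ'.mul (hpm b).ennreal_ofReal
  have hS : ∀ b, MeasurableSet {ω | A t ω = b} := fun b => hA t (measurableSet_singleton b)
  have e1 : ∀ ω, Z ω * g (A t ω) = ∑ b, g b * ({ω | A t ω = b}).indicator Z ω := by
    intro ω
    rw [Finset.sum_eq_single (A t ω)]
    · simp [mul_comm]
    · intro b _ hb
      simp [Set.indicator, hb.symm]
    · simp
  have e2 : ∀ ω, Z ω * ∑ b, g b * ENNReal.ofReal (p t ω b)
      = ∑ b, g b * (Z ω * ENNReal.ofReal (p t ω b)) := by
    intro ω
    rw [Finset.mul_sum]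
    exact Finset.sum_congr rfl fun b _ => by ring
  simp_rw [e1, e2]
  rw [lintegral_finsetSum _ fun b _ => (hZ'.indicator (hS b)).const_mul _,
    lintegral_finsetSum _ fun b _ => (hZp b).const_mul _]
  refine Finset.sum_congr rfl fun b _ => ?_
  rw [lintegral_const_mul _ (hZ'.indicator (hS b)),
    lintegral_const_mul _ (hZp b), lintegral_indicator (hS b),
    setLIntegral_eq_of_condExp hle P (hS b) (hpm b) (fun ω => hp0 t ht ω b) (harm t ht b) hZ]

/-- Given the past and `A_t = a`, the reward `Y_t` has law `ν_a`. -/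
lemma setLIntegral_mul_reward {Ω : Type*} [MeasurableSpace Ω] {K : ℕ}
    (P : Measure Ω) [IsProbabilityMeasure P]
    (ν : Fin K → Measure ℝ) (hνprob : ∀ a, IsProbabilityMeasure (ν a))
    (A : ℕ → Ω → Fin K) (Y : ℕ → Ω → ℝ)
    (hA : ∀ t, Measurable (A t)) (hY : ∀ t, Measurable (Y t))
    (hreward : ∀ t, 1 ≤ t → ∀ s : Set ℝ, MeasurableSet s →
      (P[({ω | Y t ω ∈ s}).indicator (fun _ => (1 : ℝ)) |
          hist A Y (t - 1) ⊔ MeasurableSpace.comap (A t) inferInstance])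
        =ᵐ[P] fun ω => ((ν (A t ω)) s).toReal)
    {t : ℕ} (ht : 1 ≤ t) (a : Fin K) {f : ℝ → ENNReal} (hf : Measurable f)
    {Z : Ω → ENNReal} (hZ : Measurable[hist A Y (t - 1)] Z) :
    ∫⁻ ω in {ω | A t ω = a}, Z ω * f (Y t ω) ∂P
      = (∫⁻ ω in {ω | A t ω = a}, Z ω ∂P) * ∫⁻ x, f x ∂(ν a) := by
  have hle := hist_le hA hY (t - 1)
  have hle2 := sup_le hle (hA t).comap_le
  have hS : MeasurableSet {ω | A t ω = a} := hA t (measurableSet_singleton a)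
  have hZ' : Measurable Z := hZ.mono hle le_rfl
  set Z₁ : Ω → ENNReal := ({ω | A t ω = a}).indicator Z with hZ₁
  have hZ₁m : Measurable Z₁ := hZ'.indicator hS
  have hZ₁m' : Measurable[hist A Y (t - 1) ⊔ MeasurableSpace.comap (A t) inferInstance] Z₁ := by
    refine (hZ.mono le_sup_left le_rfl).indicator ?_
    exact (le_sup_right : _ ≤ hist A Y (t - 1) ⊔ MeasurableSpace.comap (A t) inferInstance) _
      ⟨{a}, measurableSet_singleton a, rfl⟩
  -- the law of `Y_t` under the measure with density `Z 1_{A_t = a}` is a multiple of `ν_a`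
  have hlaw : (P.withDensity Z₁).map (Y t) = (∫⁻ ω, Z₁ ω ∂P) • ν a := by
    ext s hs
    have hYs : MeasurableSet {ω | Y t ω ∈ s} := hY t hs
    have hgm : Measurable fun ω => ((ν (A t ω)) s).toReal :=
      (measurable_of_finite (fun b => ((ν b) s).toReal)).comp (hA t)
    rw [Measure.map_apply (hY t) hs, withDensity_apply _ (hY t hs)]
    have := setLIntegral_eq_of_condExp hle2 P hYs hgm (fun _ => ENNReal.toReal_nonneg)
      (hreward t ht s hs) hZ₁m'
    refine this.trans ?_
    rw [Measure.smul_apply, smul_eq_mul, ← lintegral_mul_const _ hZ₁m]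
    refine lintegral_congr fun ω => ?_
    by_cases h : A t ω = a
    · rw [h, ENNReal.ofReal_toReal (measure_ne_top _ _)]
    · simp [hZ₁, h]
  have hfY : Measurable fun ω => f (Y t ω) := hf.comp (hY t)
  rw [← lintegral_indicator hS, ← lintegral_indicator hS]
  calc ∫⁻ ω, ({ω | A t ω = a}).indicator (fun ω => Z ω * f (Y t ω)) ω ∂P
      = ∫⁻ ω, (Z₁ * fun ω => f (Y t ω)) ω ∂P := by
        refine lintegral_congr fun ω => ?_
        by_cases h : A t ω = a <;> simp [hZ₁, h]
    _ = ∫⁻ x, f x ∂((P.withDensity Z₁).map (Y t)) := by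
        rw [lintegral_map hf (hY t),
          lintegral_withDensity_eq_lintegral_mul _ hZ₁m hfY]
    _ = _ := by rw [hlaw, lintegral_smul_measure, smul_eq_mul]

/-! ### Exponential supermartingales -/

/-- The exponential of a sum of adapted increments, each multiplicatively nonincreasing in
conditional mean, has expectation at most one. -/
lemma lintegral_exp_sum_le {Ω : Type*} [MeasurableSpace Ω] {K : ℕ}
    (P : Measure Ω) [IsProbabilityMeasure P]
    (A : ℕ → Ω → Fin K) (Y : ℕ → Ω → ℝ) (X : ℕ → Ω → ℝ)
    (hX : ∀ t, 1 ≤ t → Measurable[hist A Y t] (X t))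
    (hstep : ∀ t, 1 ≤ t → ∀ Z : Ω → ENNReal, Measurable[hist A Y (t - 1)] Z →
      ∫⁻ ω, Z ω * ENNReal.ofReal (Real.exp (X t ω)) ∂P ≤ ∫⁻ ω, Z ω ∂P) (T : ℕ) :
    ∫⁻ ω, ENNReal.ofReal (Real.exp (∑ t ∈ Finset.Icc 1 T, X t ω)) ∂P ≤ 1 := by
  induction T with
  | zero => simp
  | succ T ih =>
    refine le_trans (le_of_eq ?_) ((hstep (T + 1) (by omega)
      (fun ω => ENNReal.ofReal (Real.exp (∑ t ∈ Finset.Icc 1 T, X t ω))) ?_).trans ih)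
    · refine lintegral_congr fun ω => ?_
      rw [Finset.sum_Icc_succ_top (by omega), Real.exp_add, ENNReal.ofReal_mul (Real.exp_nonneg _)]
    · refine (Real.measurable_exp.comp (Finset.measurable_fun_sum _ fun s hs => ?_)).ennreal_ofReal
      rw [Finset.mem_Icc] at hs
      exact (hX s hs.1).mono (hist_mono (by omega)) le_rfl

/-- Markov's inequality for `exp W`, when it has mean at most one. -/
lemma measure_exp_sum_ge_le {Ω : Type*} [MeasurableSpace Ω]
    (P : Measure Ω) [IsProbabilityMeasure P] (W : Ω → ℝ)
    (hW : Measurable W) (hle : ∫⁻ ω, ENNReal.ofReal (Real.exp (W ω)) ∂P ≤ 1) (x : ℝ)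
    (B : Set Ω) (hB : ∀ ω ∈ B, x ≤ W ω) : P.real B ≤ Real.exp (-x) := by
  have h1 := mul_meas_ge_le_lintegral (μ := P) (hW.exp.ennreal_ofReal)
    (ENNReal.ofReal (Real.exp x))
  have h2 : P B ≤ P {ω | ENNReal.ofReal (Real.exp x) ≤ ENNReal.ofReal (Real.exp (W ω))} :=
    measure_mono fun ω hω => ENNReal.ofReal_le_ofReal (Real.exp_le_exp.2 (hB ω hω))
  have h3 : ENNReal.ofReal (Real.exp x) * P B ≤ 1 := (mul_le_mul_right h2 _).trans (h1.trans hle)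
  have h4 := ENNReal.toReal_mono ENNReal.one_ne_top h3
  rw [ENNReal.toReal_mul, ENNReal.toReal_ofReal (Real.exp_nonneg _), ENNReal.toReal_one] at h4
  rw [Real.exp_neg, ← one_div, le_div_iff₀ (Real.exp_pos _), mul_comm]
  exact h4

/-- Hoeffding's lemma on `[0, 1]`, normalised. -/
lemma lintegral_exp_hoeffding (ρ : Measure ℝ) [IsProbabilityMeasure ρ]
    (hsupp : ρ (Set.Icc (0 : ℝ) 1)ᶜ = 0) (l : ℝ) :
    ∫⁻ x, ENNReal.ofReal (Real.exp (l * (x - ∫ y, y ∂ρ) - l ^ 2 / 8)) ∂ρ ≤ 1 := by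
  have hb : ∀ᵐ x ∂ρ, (id x : ℝ) ∈ Set.Icc (0 : ℝ) 1 := by
    rw [ae_iff]; exact hsupp
  have h := ProbabilityTheory.hasSubgaussianMGF_of_mem_Icc (aemeasurable_id) hb
  have h1 := h.mgf_le l
  have h2 := h.integrable_exp_mul l
  simp only [id] at h1 h2
  rw [ProbabilityTheory.mgf] at h1
  have e : ∀ x : ℝ, Real.exp (l * (x - ∫ y, y ∂ρ) - l ^ 2 / 8)
      = Real.exp (l * (x - ∫ y, y ∂ρ)) * Real.exp (-(l ^ 2 / 8)) := fun x => by
    rw [← Real.exp_add]; ring_nf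
  rw [← ofReal_integral_eq_lintegral_ofReal]
  · rw [← ENNReal.ofReal_one]
    refine ENNReal.ofReal_le_ofReal ?_
    simp_rw [e]
    rw [integral_mul_const]
    refine (mul_le_mul_of_nonneg_right h1 (Real.exp_nonneg _)).trans ?_
    rw [← Real.exp_add, Real.exp_le_one_iff]
    simp
    apply le_of_eq
    ring
  · simp_rw [e]
    exact h2.mul_const _
  · exact ae_of_all _ fun _ => Real.exp_nonneg _

/-! ### Concentration of the empirical means -/

/-- The empirical mean of some arm leaves its confidence interval at time `t`. -/
def concFail {Ω : Type*} {K : ℕ} (A : ℕ → Ω → Fin K) (Y : ℕ → Ω → ℝ) (μ : Fin K → ℝ) (t : ℕ) :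
    Set Ω :=
  {ω | ∃ a, 1 ≤ pulls A a t ω ∧
    Real.sqrt (2 * Real.log t / (pulls A a t ω : ℝ)) < |empMean A Y a t ω - μ a|}

/-- The process `exp (l ∑_{s ≤ t, A_s = a} (Y_s - μ_a) - l² N_a(t) / 8)` has mean at most one. -/
lemma lintegral_exp_reward_le {Ω : Type*} [MeasurableSpace Ω] {K : ℕ}
    (P : Measure Ω) [IsProbabilityMeasure P]
    (ν : Fin K → Measure ℝ) (hνprob : ∀ a, IsProbabilityMeasure (ν a))
    (hνsupp : ∀ a, (ν a) (Set.Icc (0 : ℝ) 1)ᶜ = 0)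
    (μ : Fin K → ℝ) (hμ : ∀ a, μ a = ∫ x, x ∂(ν a))
    (A : ℕ → Ω → Fin K) (Y : ℕ → Ω → ℝ)
    (hA : ∀ t, Measurable (A t)) (hY : ∀ t, Measurable (Y t))
    (hreward : ∀ t, 1 ≤ t → ∀ s : Set ℝ, MeasurableSet s →
      (P[({ω | Y t ω ∈ s}).indicator (fun _ => (1 : ℝ)) |
          hist A Y (t - 1) ⊔ MeasurableSpace.comap (A t) inferInstance])
        =ᵐ[P] fun ω => ((ν (A t ω)) s).toReal)
    (a : Fin K) (l : ℝ) (T : ℕ) :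
    ∫⁻ ω, ENNReal.ofReal (Real.exp (∑ t ∈ Finset.Icc 1 T,
      if A t ω = a then l * (Y t ω - μ a) - l ^ 2 / 8 else 0)) ∂P ≤ 1 := by
  refine lintegral_exp_sum_le P A Y
    (fun t ω => if A t ω = a then l * (Y t ω - μ a) - l ^ 2 / 8 else 0) ?_ ?_ T
  · intro t ht
    exact Measurable.ite (measurable_arm_hist ht le_rfl (measurableSet_singleton a))
      ((((measurable_reward_hist ht le_rfl).sub_const _).const_mul _).sub_const _)
      measurable_const
  · intro t ht Z hZ
    have hS : MeasurableSet {ω | A t ω = a} := hA t (measurableSet_singleton a)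
    have hf : Measurable fun x : ℝ => ENNReal.ofReal (Real.exp (l * (x - μ a) - l ^ 2 / 8)) := by
      fun_prop
    rw [← lintegral_add_compl _ hS, ← lintegral_add_compl Z hS]
    refine add_le_add ?_ (le_of_eq ?_)
    · have := setLIntegral_mul_reward P ν hνprob A Y hA hY hreward ht a hf hZ
      refine le_trans (le_of_eq ?_) (this.le.trans ?_)
      · exact setLIntegral_congr_fun hS fun ω hω => by
          have : A t ω = a := hω
          simp [this]
      · refine mul_le_of_le_one_right' ?_
        have := hνprob a
        rw [hμ a]
        exact lintegral_exp_hoeffding (ν a) (hνsupp a) l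
    · exact setLIntegral_congr_fun hS.compl fun ω hω => by
        have : ¬ A t ω = a := hω
        simp [this]

lemma measureReal_concFail_le {Ω : Type*} [MeasurableSpace Ω] {K : ℕ}
    (P : Measure Ω) [IsProbabilityMeasure P]
    (ν : Fin K → Measure ℝ) (hνprob : ∀ a, IsProbabilityMeasure (ν a))
    (hνsupp : ∀ a, (ν a) (Set.Icc (0 : ℝ) 1)ᶜ = 0)
    (μ : Fin K → ℝ) (hμ : ∀ a, μ a = ∫ x, x ∂(ν a))
    (A : ℕ → Ω → Fin K) (Y : ℕ → Ω → ℝ)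
    (hA : ∀ t, Measurable (A t)) (hY : ∀ t, Measurable (Y t))
    (hreward : ∀ t, 1 ≤ t → ∀ s : Set ℝ, MeasurableSet s →
      (P[({ω | Y t ω ∈ s}).indicator (fun _ => (1 : ℝ)) |
          hist A Y (t - 1) ⊔ MeasurableSpace.comap (A t) inferInstance])
        =ᵐ[P] fun ω => ((ν (A t ω)) s).toReal)
    {t : ℕ} (ht : 1 ≤ t) :
    P.real (concFail A Y μ t) ≤ 2 * K / (t : ℝ) ^ 3 := by
  have htR : (1 : ℝ) ≤ t := by exact_mod_cast ht
  have hlog : 0 ≤ Real.log t := Real.log_nonneg htR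
  -- the two one-sided deviations with exactly `n` pulls of arm `a`; `x.2.2` carries the sign
  let B : Fin K × ℕ × Bool → Set Ω := fun x => {ω | pulls A x.1 t ω = x.2.1 ∧
    Real.sqrt (2 * Real.log t / (x.2.1 : ℝ)) <
      (if x.2.2 then 1 else -1) * (empMean A Y x.1 t ω - μ x.1)}
  let I : Finset (Fin K × ℕ × Bool) :=
    (Finset.univ : Finset (Fin K)) ×ˢ (Finset.Icc 1 t ×ˢ (Finset.univ : Finset Bool))
  have hsub : concFail A Y μ t ⊆ ⋃ x ∈ I, B x := by
    rintro ω ⟨a, ha1, ha2⟩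
    have hle : pulls A a t ω ≤ t := by
      unfold pulls
      refine (Finset.sum_le_card_nsmul _ _ 1 fun s _ => by split_ifs <;> simp).trans (by simp)
    simp only [Set.mem_iUnion, exists_prop]
    rcases lt_abs.1 ha2 with h | h
    · exact ⟨(a, pulls A a t ω, true), by simp [I, ha1, hle], rfl, by simpa using h⟩
    · exact ⟨(a, pulls A a t ω, false), by simp [I, ha1, hle], rfl, by simpa using h⟩
  have hB : ∀ x ∈ I, P.real (B x) ≤ 1 / (t : ℝ) ^ 4 := by
    rintro ⟨a, n, σ⟩ hx
    have hn : 1 ≤ n := by simp [I] at hx; exact hx.1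
    have hnR : (0 : ℝ) < n := by exact_mod_cast hn
    obtain ⟨e, he⟩ : ∃ e : ℝ, e = Real.sqrt (2 * Real.log t / (n : ℝ)) := ⟨_, rfl⟩
    obtain ⟨sg, hsg⟩ : ∃ sg : ℝ, sg = if σ then 1 else -1 := ⟨_, rfl⟩
    have hsg2 : sg ^ 2 = 1 := by rw [hsg]; split_ifs <;> norm_num
    have he0 : 0 ≤ e := he ▸ Real.sqrt_nonneg _
    have he2 : n * e ^ 2 = 2 * Real.log t := by
      rw [he, Real.sq_sqrt (by positivity)]; field_simp
    have hm := lintegral_exp_reward_le P ν hνprob hνsupp μ hμ A Y hA hY hreward a (4 * e * sg) t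
    refine (measure_exp_sum_ge_le P _ ?_ hm (4 * Real.log t) _ ?_).trans (le_of_eq ?_)
    · refine Finset.measurable_fun_sum _ fun s _ => ?_
      exact Measurable.ite (hA s (measurableSet_singleton a))
        ((((hY s).sub_const _).const_mul _).sub_const _) measurable_const
    · rintro ω ⟨h1, h2⟩
      simp only at h1 h2
      rw [← he, ← hsg] at h2
      have hne : pulls A a t ω ≠ 0 := by omega
      rw [empMean, if_neg hne, h1] at h2
      have hcount : ∑ s ∈ Finset.Icc 1 t, (if A s ω = a then (1 : ℝ) else 0) = n := by
        rw [← h1, pulls]; push_cast; rfl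
      have hsum : ∑ s ∈ Finset.Icc 1 t,
          (if A s ω = a then (4 * e * sg) * (Y s ω - μ a) - (4 * e * sg) ^ 2 / 8 else 0)
          = (4 * e * sg) * ∑ s ∈ Finset.Icc 1 t, (if A s ω = a then Y s ω else 0)
            - ((4 * e * sg) * μ a + (4 * e * sg) ^ 2 / 8) * n := by
        rw [← hcount, Finset.mul_sum, Finset.mul_sum, ← Finset.sum_sub_distrib]
        refine Finset.sum_congr rfl fun s _ => ?_
        split_ifs <;> ring
      rw [hsum]
      set R := ∑ s ∈ Finset.Icc 1 t, (if A s ω = a then Y s ω else 0)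
      have h3 : n * e ≤ sg * (R - n * μ a) := by
        have := mul_le_mul_of_nonneg_left h2.le hnR.le
        refine this.trans (le_of_eq ?_)
        field_simp
      have h4 : 4 * e * (n * e) ≤ 4 * e * (sg * (R - n * μ a)) :=
        mul_le_mul_of_nonneg_left h3 (by positivity)
      have h5 : (4 * e * sg) ^ 2 = 16 * e ^ 2 := by rw [mul_pow, hsg2]; ring
      rw [h5]
      nlinarith
    · rw [Real.exp_neg, ← one_div, show (4 : ℝ) * Real.log t = ((4 : ℕ) : ℝ) * Real.log t by simp,
        Real.exp_nat_mul, Real.exp_log (by linarith)]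
  calc P.real (concFail A Y μ t) ≤ P.real (⋃ x ∈ I, B x) := measureReal_mono hsub (measure_ne_top _ _)
    _ ≤ ∑ x ∈ I, P.real (B x) := measureReal_biUnion_finset_le _ _
    _ ≤ ∑ x ∈ I, 1 / (t : ℝ) ^ 4 := Finset.sum_le_sum hB
    _ = 2 * K / (t : ℝ) ^ 3 := by
        have : (t : ℝ) ≠ 0 := by positivity
        simp [I]
        field_simp

/-! ### Rarely pulled arms are rarely likely to be pulled -/

/-- Round `s` gives arm `b` probability at least `c` although `b` was pulled at most `L` times
before that round. -/
def under {Ω : Type*} {K : ℕ} (p : ℕ → Ω → Fin K → ℝ) (A : ℕ → Ω → Fin K) (c L : ℝ) (b : Fin K)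
    (s : ℕ) : Set Ω :=
  {ω | c ≤ p s ω b ∧ (pulls A b (s - 1) ω : ℝ) ≤ L}

open scoped Classical in
/-- The number of rounds `s ≤ t` in `under p A c L b s`. -/
def underCount {Ω : Type*} {K : ℕ} (p : ℕ → Ω → Fin K → ℝ) (A : ℕ → Ω → Fin K) (c L : ℝ)
    (b : Fin K) (t : ℕ) (ω : Ω) : ℝ :=
  ∑ s ∈ Finset.Icc 1 t, if ω ∈ under p A c L b s then 1 else 0

lemma pulls_succ {Ω : Type*} {K : ℕ} (A : ℕ → Ω → Fin K) (b : Fin K) (t : ℕ) (ω : Ω) :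
    pulls A b (t + 1) ω = pulls A b t ω + if A (t + 1) ω = b then 1 else 0 := by
  rw [pulls, Finset.sum_Icc_succ_top (by omega)]
  rfl

lemma pulls_mono {Ω : Type*} {K : ℕ} (A : ℕ → Ω → Fin K) (b : Fin K) {s t : ℕ} (h : s ≤ t) (ω : Ω) :
    pulls A b s ω ≤ pulls A b t ω :=
  Finset.sum_le_sum_of_subset (Finset.Icc_subset_Icc_right h)

open scoped Classical in
/-- Arm `b` is pulled at most `L + 1` times in the rounds counted by `underCount`, since each
of these comes after at most `L` pulls. -/
lemma under_pulls_le {Ω : Type*} {K : ℕ} (p : ℕ → Ω → Fin K → ℝ) (A : ℕ → Ω → Fin K) (c L : ℝ)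
    (hL : 0 ≤ L) (b : Fin K) (t : ℕ) (ω : Ω) :
    ∑ s ∈ Finset.Icc 1 t, (if ω ∈ under p A c L b s then (if A s ω = b then (1 : ℝ) else 0) else 0)
      ≤ L + 1 := by
  suffices h : ∑ s ∈ Finset.Icc 1 t,
      (if ω ∈ under p A c L b s then (if A s ω = b then (1 : ℝ) else 0) else 0) ≤ L + 1 ∧
      ∑ s ∈ Finset.Icc 1 t,
      (if ω ∈ under p A c L b s then (if A s ω = b then (1 : ℝ) else 0) else 0) ≤ pulls A b t ω from
    h.1
  induction t with
  | zero => simp; linarith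
  | succ t ih =>
    obtain ⟨h1, h2⟩ := ih
    rw [Finset.sum_Icc_succ_top (by omega), pulls_succ]
    push_cast
    by_cases hE : ω ∈ under p A c L b (t + 1)
    · have hE2 : (pulls A b t ω : ℝ) ≤ L := hE.2
      simp only [hE, if_true]
      split_ifs
      · exact ⟨by linarith, by linarith⟩
      · exact ⟨by linarith, by linarith⟩
    · simp only [hE, if_false]
      split_ifs
      · exact ⟨by linarith, by linarith⟩
      · exact ⟨by linarith, by linarith⟩

open scoped Classical in
/-- An arm pulled at most `L` times cannot often have been likely to be pulled:
`exp ∑_{s ≤ t} 1_{E_s} (c (1 - e⁻¹) - 1_{A_s = b})` is a supermartingale, where `E_s` is the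
predictable event `under p A c L b s`, on which `p_s(b) ≥ c`. -/
lemma measureReal_underCount_ge_le {Ω : Type*} [MeasurableSpace Ω] {K : ℕ}
    (P : Measure Ω) [IsProbabilityMeasure P]
    (p : ℕ → Ω → Fin K → ℝ) (A : ℕ → Ω → Fin K) (Y : ℕ → Ω → ℝ)
    (hA : ∀ t, Measurable (A t)) (hY : ∀ t, Measurable (Y t))
    (hpmeas : ∀ t, 1 ≤ t → Measurable[hist A Y (t - 1)] (p t))
    (hp : ∀ t, 1 ≤ t → ∀ ω, (∀ a, 0 ≤ p t ω a) ∧ ∑ a, p t ω a = 1)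
    (harm : ∀ t, 1 ≤ t → ∀ a : Fin K,
      (P[({ω | A t ω = a}).indicator (fun _ => (1 : ℝ)) | hist A Y (t - 1)])
        =ᵐ[P] fun ω => p t ω a)
    (c L : ℝ) (hc : 0 < c) (hL : 0 ≤ L) (b : Fin K) (t : ℕ) (x : ℝ) :
    P.real {ω | x ≤ underCount p A c L b t ω}
      ≤ Real.exp (L + 1 - c * (1 - Real.exp (-1)) * x) := by
  obtain ⟨c', hc'⟩ : ∃ c', c' = c * (1 - Real.exp (-1)) := ⟨_, rfl⟩
  have he1 : 0 < 1 - Real.exp (-1) := by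
    have : Real.exp (-1) < 1 := by rw [Real.exp_lt_one_iff]; norm_num
    linarith
  have hc'0 : 0 < c' := hc' ▸ mul_pos hc he1
  rw [← hc']
  have hEm : ∀ s, 1 ≤ s → MeasurableSet[hist A Y (s - 1)] (under p A c L b s) := by
    intro s hs
    have h1 : Measurable[hist A Y (s - 1)] fun ω => p s ω b :=
      (measurable_pi_apply b).comp (hpmeas s hs)
    have h2 : Measurable[hist A Y (s - 1)] fun ω => (pulls A b (s - 1) ω : ℝ) :=
      (measurable_from_top (f := fun n : ℕ => (n : ℝ))).comp (measurable_pulls_hist b (s - 1))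
    exact (h1 measurableSet_Ici).inter (h2 measurableSet_Iic)
  set X : ℕ → Ω → ℝ := fun s ω =>
    if ω ∈ under p A c L b s then c' - (if A s ω = b then (1 : ℝ) else 0) else 0 with hXdef
  have hX : ∀ s, 1 ≤ s → Measurable[hist A Y s] (X s) := by
    intro s hs
    refine Measurable.ite (hist_mono (Nat.sub_le s 1) _ (hEm s hs)) ?_ measurable_const
    exact measurable_const.sub (Measurable.ite
      (measurable_arm_hist hs le_rfl (measurableSet_singleton b)) measurable_const measurable_const)
  have hstep : ∀ s, 1 ≤ s → ∀ Z : Ω → ENNReal, Measurable[hist A Y (s - 1)] Z →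
      ∫⁻ ω, Z ω * ENNReal.ofReal (Real.exp (X s ω)) ∂P ≤ ∫⁻ ω, Z ω ∂P := by
    intro s hs Z hZ
    have hES : MeasurableSet (under p A c L b s) := hist_le hA hY (s - 1) _ (hEm s hs)
    rw [← lintegral_add_compl _ hES, ← lintegral_add_compl Z hES]
    refine add_le_add ?_ (le_of_eq ?_)
    · set Z₁ := (under p A c L b s).indicator Z
      have hZ₁ : Measurable[hist A Y (s - 1)] Z₁ := hZ.indicator (hEm s hs)
      set g : Fin K → ENNReal := fun a =>
        ENNReal.ofReal (Real.exp (c' - if a = b then (1 : ℝ) else 0)) with hg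
      have h := lintegral_mul_arm P p A Y hA hY hpmeas (fun t ht ω => (hp t ht ω).1) harm hs g hZ₁
      rw [← lintegral_indicator hES, ← lintegral_indicator hES]
      calc ∫⁻ ω, (under p A c L b s).indicator
              (fun ω => Z ω * ENNReal.ofReal (Real.exp (X s ω))) ω ∂P
          = ∫⁻ ω, Z₁ ω * g (A s ω) ∂P := by
            refine lintegral_congr fun ω => ?_
            by_cases hω : ω ∈ under p A c L b s <;> simp [Z₁, hω, hXdef, hg]
        _ = ∫⁻ ω, Z₁ ω * ∑ a, g a * ENNReal.ofReal (p s ω a) ∂P := h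
        _ ≤ ∫⁻ ω, Z₁ ω ∂P := by
            refine lintegral_mono fun ω => ?_
            by_cases hω : ω ∈ under p A c L b s
            · refine mul_le_of_le_one_right' ?_
              obtain ⟨hp0, hp1⟩ := hp s hs ω
              have hcp : c ≤ p s ω b := hω.1
              have : ∑ a, g a * ENNReal.ofReal (p s ω a) = ENNReal.ofReal
                  (∑ a, Real.exp (c' - if a = b then (1 : ℝ) else 0) * p s ω a) := by
                rw [ENNReal.ofReal_sum_of_nonneg fun a _ =>
                  mul_nonneg (Real.exp_nonneg _) (hp0 a)]
                refine Finset.sum_congr rfl fun a _ => ?_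
                rw [ENNReal.ofReal_mul (Real.exp_nonneg _)]
              rw [this, ← ENNReal.ofReal_one]
              refine ENNReal.ofReal_le_ofReal ?_
              have e : ∀ a, Real.exp (c' - if a = b then (1 : ℝ) else 0) * p s ω a
                  = Real.exp c' * (p s ω a
                    - if a = b then (1 - Real.exp (-1)) * p s ω b else 0) := by
                intro a
                by_cases hab : a = b
                · subst hab
                  simp only [if_true]
                  rw [sub_eq_add_neg, Real.exp_add]; ring
                · simp [hab]
              simp_rw [e]
              rw [← Finset.mul_sum, Finset.sum_sub_distrib, hp1]
              simp only [Finset.sum_ite_eq', Finset.mem_univ, if_true]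
              have h1 : 1 - (1 - Real.exp (-1)) * p s ω b ≤ Real.exp (-c') := by
                have := Real.add_one_le_exp (-c')
                have : c' ≤ (1 - Real.exp (-1)) * p s ω b := by
                  rw [hc', mul_comm]; exact mul_le_mul_of_nonneg_left hcp he1.le
                linarith
              calc _ ≤ Real.exp c' * Real.exp (-c') :=
                    mul_le_mul_of_nonneg_left h1 (Real.exp_nonneg _)
                _ = 1 := by rw [← Real.exp_add]; simp
            · simp [Z₁, hω]
    · refine setLIntegral_congr_fun hES.compl fun ω hω => ?_
      have : ω ∉ under p A c L b s := hω
      simp [hXdef, this]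
  have hm := lintegral_exp_sum_le P A Y X hX hstep t
  refine (measure_exp_sum_ge_le P _ ?_ hm (c' * x - (L + 1)) _ ?_).trans (le_of_eq ?_)
  · refine Finset.measurable_fun_sum _ fun s hs => ?_
    exact (hX s (Finset.mem_Icc.1 hs).1).mono (hist_le hA hY s) le_rfl
  · intro ω hω
    have h1 : x ≤ underCount p A c L b t ω := hω
    have h2 := under_pulls_le p A c L hL b t ω
    have h3 : ∑ s ∈ Finset.Icc 1 t, X s ω = c' * underCount p A c L b t ω - ∑ s ∈ Finset.Icc 1 t,
        (if ω ∈ under p A c L b s then (if A s ω = b then (1 : ℝ) else 0) else 0) := by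
      rw [underCount, Finset.mul_sum, ← Finset.sum_sub_distrib]
      refine Finset.sum_congr rfl fun s _ => ?_
      simp only [hXdef]
      split_ifs <;> ring
    rw [h3]
    have := mul_le_mul_of_nonneg_left h1 hc'0.le
    linarith
  · congr 1; ring

/-! ### Suboptimal rounds -/

/-- If all empirical means are within their confidence intervals after `u` rounds and a vector
`v` of gap at least `Δ` is preferred to an optimal `q`, then some arm in the support of `v` has
been pulled at most `8 log u / Δ²` times. -/
lemma exists_under_of_subopt {Ω : Type*} {K : ℕ} (A : ℕ → Ω → Fin K) (Y : ℕ → Ω → ℝ)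
    (μ : Fin K → ℝ) (hμ01 : ∀ a, 0 ≤ μ a ∧ μ a ≤ 1) {u : ℕ} (hu : 2 ≤ u) {ω : Ω}
    (hω : ω ∉ concFail A Y μ u) {v q : Fin K → ℝ}
    (hv : (∀ a, 0 ≤ v a) ∧ ∑ a, v a = 1) (hq : ∀ a, 0 ≤ q a) {Δ : ℝ} (hΔ : 0 < Δ)
    (hgap : dot v μ + Δ ≤ dot q μ)
    (hle : dot q (fun a => ucbIndex A Y a u ω) ≤ dot v (fun a => ucbIndex A Y a u ω)) :
    ∃ b, 0 < v b ∧ (pulls A b u ω : ℝ) ≤ 8 * Real.log u / Δ ^ 2 := by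
  have huR : (2 : ℝ) ≤ u := by exact_mod_cast hu
  have hlog : 1 ≤ 2 * Real.log u := by
    have h1 := Real.log_two_gt_d9
    have h2 := Real.log_le_log (by norm_num) huR
    linarith
  obtain ⟨r, hr⟩ : ∃ r : Fin K → ℝ, r = fun a =>
    Real.sqrt (2 * Real.log u / (max (pulls A a u ω) 1 : ℕ)) := ⟨_, rfl⟩
  have hU : ∀ a, μ a ≤ ucbIndex A Y a u ω ∧ ucbIndex A Y a u ω ≤ μ a + 2 * r a := by
    intro a
    rw [ucbIndex, if_neg (by omega), hr]
    by_cases hN : pulls A a u ω = 0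
    · -- the bonus is at least one here, since `2 log u ≥ 1`
      have hs : 1 ≤ Real.sqrt (2 * Real.log u) := Real.one_le_sqrt.2 hlog
      simp only [empMean, hN, if_true]
      simp only [zero_le, sup_of_le_right, Nat.cast_one, div_one]
      have := hμ01 a
      constructor <;> linarith
    · have hN1 : 1 ≤ pulls A a u ω := Nat.one_le_iff_ne_zero.2 hN
      have hc : |empMean A Y a u ω - μ a| ≤ Real.sqrt (2 * Real.log u / (pulls A a u ω : ℝ)) := by
        by_contra h
        exact hω ⟨a, hN1, not_le.1 h⟩
      simp only [max_eq_left hN1]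
      have := abs_le.1 hc
      constructor <;> linarith
  by_contra hcon
  push Not at hcon
  have hrlt : ∀ b, 0 < v b → 2 * r b < Δ := by
    intro b hb
    have h1 := hcon b hb
    have h2 : (pulls A b u ω : ℝ) ≤ (max (pulls A b u ω) 1 : ℕ) := by
      exact_mod_cast le_max_left _ _
    have h3 : (0 : ℝ) < (max (pulls A b u ω) 1 : ℕ) := by
      exact_mod_cast lt_of_lt_of_le one_pos (le_max_right _ _)
    have h4 : r b < Δ / 2 := by
      rw [hr]
      refine (Real.sqrt_lt' (by positivity)).2 ?_
      rw [div_lt_iff₀ h3]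
      have h5 := h1.trans_le h2
      rw [div_lt_iff₀ (by positivity)] at h5
      nlinarith
    linarith
  obtain ⟨b, hb⟩ : ∃ b, 0 < v b := by
    by_contra h
    push Not at h
    have := Finset.sum_nonpos fun a (_ : a ∈ Finset.univ) => h a
    linarith [hv.2]
  have h1 : dot q μ ≤ dot q (fun a => ucbIndex A Y a u ω) :=
    Finset.sum_le_sum fun a _ => mul_le_mul_of_nonneg_left (hU a).1 (hq a)
  have h2 : dot v (fun a => ucbIndex A Y a u ω) < dot v μ + Δ := by
    have e : dot v μ + Δ = ∑ a, v a * (μ a + Δ) := by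
      simp_rw [mul_add]
      rw [Finset.sum_add_distrib, ← Finset.sum_mul, hv.2, one_mul]
      rfl
    rw [e]
    refine Finset.sum_lt_sum (fun a _ => ?_) ⟨b, Finset.mem_univ _, ?_⟩
    · rcases (hv.1 a).eq_or_lt with h | h
      · simp [← h]
      · exact mul_le_mul_of_nonneg_left (by linarith [(hU a).2, hrlt a h]) h.le
    · exact mul_lt_mul_of_pos_left (by linarith [(hU b).2, hrlt b hb]) hb
  linarith

open scoped Classical in
/-- If the means are concentrated throughout the second half of the first `t` rounds and round
`t + 1` is suboptimal, then some arm `b` was given probability at least `c` in at least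
`t / (4 K)` rounds, while having been pulled at most `8 log t / Δ²` times. -/
lemma exists_underCount_ge {Ω : Type*} {K : ℕ} (hK : 1 ≤ K)
    (p : ℕ → Ω → Fin K → ℝ) (A : ℕ → Ω → Fin K) (Y : ℕ → Ω → ℝ)
    (μ : Fin K → ℝ) (hμ01 : ∀ a, 0 ≤ μ a ∧ μ a ≤ 1)
    (ExtP : Finset (Fin K → ℝ))
    (hExtProb : ∀ p ∈ ExtP, (∀ a, 0 ≤ p a) ∧ ∑ a, p a = 1)
    {M Δ c : ℝ} (hΔ0 : 0 < Δ)
    (hgap : ∀ v ∈ ExtP, dot v μ ≠ M → dot v μ + Δ ≤ M)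
    (hopt : ∀ v ∈ ExtP, dot v μ = M → ∀ a, 0 < v a)
    (hc : ∀ v ∈ ExtP, ∀ a, 0 < v a → c ≤ v a)
    {q : Fin K → ℝ} (hq : q ∈ ExtP) (hqM : dot q μ = M)
    (hUCB : ∀ t, 1 ≤ t → ∀ ω, p t ω ∈ ExtP ∧
      ∀ q ∈ ExtP, dot q (fun a => ucbIndex A Y a (t - 1) ω)
        ≤ dot (p t ω) (fun a => ucbIndex A Y a (t - 1) ω))
    {t : ℕ} (ht : 4 ≤ t) {ω : Ω} (hsub : dot (p (t + 1) ω) μ ≠ M)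
    (hconc : ∀ u ∈ Finset.Icc ((t + 1) / 2) t, ω ∉ concFail A Y μ u) :
    ∃ b, (t : ℝ) / (4 * K) ≤ underCount p A c (8 * Real.log t / Δ ^ 2) b t ω := by
  have hstep : ∀ u ∈ Finset.Icc ((t + 1) / 2) t, dot (p (u + 1) ω) μ ≠ M →
      ∃ b, 0 < p (u + 1) ω b ∧ (pulls A b u ω : ℝ) ≤ 8 * Real.log t / Δ ^ 2 := by
    intro u hu hne
    have hu' := Finset.mem_Icc.1 hu
    obtain ⟨hmem, hmax⟩ := hUCB (u + 1) (by omega) ω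
    obtain ⟨b, hb, hb2⟩ := exists_under_of_subopt A Y μ hμ01 (by omega) (hconc u hu)
      (hExtProb _ hmem) (hExtProb q hq).1 hΔ0 (hqM ▸ hgap _ hmem hne) (hmax q hq)
    refine ⟨b, hb, hb2.trans ?_⟩
    have : Real.log u ≤ Real.log t :=
      Real.log_le_log (by exact_mod_cast (by omega : 0 < u)) (by exact_mod_cast hu'.2)
    gcongr
  obtain ⟨a, ha, ha2⟩ := hstep t (Finset.mem_Icc.2 ⟨by omega, le_rfl⟩) hsub
  -- optimal rounds favour the arm `a`, suboptimal ones an arm given by `hstep`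
  have hcover : ∀ s ∈ Finset.Icc ((t + 1) / 2 + 1) t,
      ∃ b, ω ∈ under p A c (8 * Real.log t / Δ ^ 2) b s := by
    intro s hs
    have hs' := Finset.mem_Icc.1 hs
    obtain ⟨u, rfl⟩ : ∃ u, s = u + 1 := ⟨s - 1, by omega⟩
    have hmem := (hUCB (u + 1) (by omega) ω).1
    by_cases h : dot (p (u + 1) ω) μ = M
    · refine ⟨a, hc _ hmem a (hopt _ hmem h a), le_trans ?_ ha2⟩
      exact_mod_cast pulls_mono A a (by omega) ω
    · obtain ⟨b, hb, hb2⟩ := hstep u (Finset.mem_Icc.2 ⟨by omega, by omega⟩) h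
      exact ⟨b, hc _ hmem b hb, hb2⟩
  have hKR : (0 : ℝ) < K := by exact_mod_cast hK
  have hsum : (t : ℝ) / 4 ≤ ∑ b, underCount p A c (8 * Real.log t / Δ ^ 2) b t ω := by
    unfold underCount
    rw [Finset.sum_comm]
    calc (t : ℝ) / 4 ≤ ∑ s ∈ Finset.Icc ((t + 1) / 2 + 1) t, (1 : ℝ) := by
          simp only [Finset.sum_const, Nat.card_Icc, nsmul_eq_mul, mul_one]
          have : t ≤ 4 * (t + 1 - ((t + 1) / 2 + 1)) := by omega
          have : (t : ℝ) ≤ 4 * ((t + 1 - ((t + 1) / 2 + 1) : ℕ) : ℝ) := by exact_mod_cast this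
          linarith
      _ ≤ ∑ s ∈ Finset.Icc ((t + 1) / 2 + 1) t, ∑ b,
          (if ω ∈ under p A c (8 * Real.log t / Δ ^ 2) b s then (1 : ℝ) else 0) := by
          refine Finset.sum_le_sum fun s hs => ?_
          obtain ⟨b, hb⟩ := hcover s hs
          have := Finset.single_le_sum
            (f := fun b => if ω ∈ under p A c (8 * Real.log t / Δ ^ 2) b s then (1 : ℝ) else 0)
            (fun b _ => by split_ifs <;> norm_num) (Finset.mem_univ b)
          simpa [hb] using this
      _ ≤ _ := by
          refine Finset.sum_le_sum_of_subset_of_nonneg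
            (Finset.Icc_subset_Icc_left (by omega)) fun s _ _ => ?_
          exact Finset.sum_nonneg fun b _ => by split_ifs <;> norm_num
  by_contra h
  push Not at h
  have hne : (Finset.univ : Finset (Fin K)).Nonempty := ⟨⟨0, hK⟩, Finset.mem_univ _⟩
  have := Finset.sum_lt_sum_of_nonempty hne fun b _ => h b
  simp only [Finset.sum_const, Finset.card_univ, Fintype.card_fin, nsmul_eq_mul] at this
  have e : (K : ℝ) * ((t : ℝ) / (4 * K)) = t / 4 := by field_simp
  linarith

/-! ### The regret bound -/

/-- **Statement 0** (Theorem 1, Case 1): the diversity-preserving UCB algorithm, run on any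
bandit problem over `D_{[0,1]}` with a finite-polytope diversity-preserving set `Pset`, has
regret at most `(24 K (ln(1+T))² + K + 2)/Δ` for every horizon `T ≥ 1`. -/
theorem ucb_regret_general_bound
    {Ω : Type*} [MeasurableSpace Ω] {K : ℕ} (hK : 1 ≤ K)
    (P : Measure Ω) [IsProbabilityMeasure P]
    -- the bandit problem: distributions over [0,1] with means μ
    (ν : Fin K → Measure ℝ) (hνprob : ∀ a, IsProbabilityMeasure (ν a))
    (hνsupp : ∀ a, (ν a) (Set.Icc (0 : ℝ) 1)ᶜ = 0)
    (μ : Fin K → ℝ) (hμ : ∀ a, μ a = ∫ x, x ∂(ν a))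
    -- the diversity-preserving set: a finite polytope of probability vectors
    (ExtP : Finset (Fin K → ℝ)) (hExtNe : ExtP.Nonempty)
    (hExtProb : ∀ p ∈ ExtP, (∀ a, 0 ≤ p a) ∧ ∑ a, p a = 1)
    (Pset : Set (Fin K → ℝ)) (hPset : Pset = convexHull ℝ (ExtP : Set (Fin K → ℝ)))
    -- optimal value M and minimal positive gap Δ (at least one p ∈ Ext(Pset) has Δ(p) > 0)
    (M : ℝ) (hM : IsGreatest {x | ∃ p ∈ Pset, dot p μ = x} M)
    (Δ : ℝ) (hΔ : IsLeast {x | ∃ p ∈ ExtP, M - dot p μ = x ∧ 0 < x} Δ)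
    -- the processes generated by the diversity-preserving UCB algorithm
    (p : ℕ → Ω → Fin K → ℝ) (A : ℕ → Ω → Fin K) (Y : ℕ → Ω → ℝ)
    (hA : ∀ t, Measurable (A t)) (hY : ∀ t, Measurable (Y t))
    (hpmeas : ∀ t, 1 ≤ t → Measurable[hist A Y (t - 1)] (p t))
    -- UCB action choice: p_t maximizes ⟨·, U(t-1)⟩ over Ext(Pset)
    (hUCB : ∀ t, 1 ≤ t → ∀ ω, p t ω ∈ ExtP ∧
      ∀ q ∈ ExtP, dot q (fun a => ucbIndex A Y a (t - 1) ω)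
        ≤ dot (p t ω) (fun a => ucbIndex A Y a (t - 1) ω))
    -- given the past, the arm A_t is drawn according to p_t
    (harm : ∀ t, 1 ≤ t → ∀ a : Fin K,
      (P[({ω | A t ω = a}).indicator (fun _ => (1 : ℝ)) | hist A Y (t - 1)])
        =ᵐ[P] fun ω => p t ω a)
    -- given the past and A_t, the reward Y_t is drawn according to ν_{A_t}
    (hreward : ∀ t, 1 ≤ t → ∀ s : Set ℝ, MeasurableSet s →
      (P[({ω | Y t ω ∈ s}).indicator (fun _ => (1 : ℝ)) |
          hist A Y (t - 1) ⊔ MeasurableSpace.comap (A t) inferInstance])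
        =ᵐ[P] fun ω => ((ν (A t ω)) s).toReal)
    -- `p★_min(ν) > 0`: every optimal mixed action puts positive mass on every arm
    (hpstarmin : ∀ q ∈ Pset, dot q μ = M → ∀ a, 0 < q a) :
    ∃ C : ℝ, ∀ T : ℕ,
      T * M - ∫ ω, (∑ t ∈ Finset.Icc 1 T, dot (p t ω) μ) ∂P ≤ C := by
  have hμ01 : ∀ a, 0 ≤ μ a ∧ μ a ≤ 1 := by
    intro a
    have := hνprob a
    have hae : ∀ᵐ x ∂(ν a), x ∈ Set.Icc (0 : ℝ) 1 := by rw [ae_iff]; exact hνsupp a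
    have hinteg : Integrable (fun x : ℝ => x) (ν a) :=
      Integrable.of_mem_Icc 0 1 aemeasurable_id hae
    rw [hμ a]
    refine ⟨integral_nonneg_of_ae (hae.mono fun x hx => hx.1), ?_⟩
    calc ∫ x, x ∂(ν a) ≤ ∫ _, (1 : ℝ) ∂(ν a) :=
          integral_mono_ae hinteg (integrable_const _) (hae.mono fun x hx => hx.2)
      _ = 1 := by simp
  have hmemP : ∀ v ∈ ExtP, v ∈ Pset := fun v hv => hPset ▸ subset_convexHull ℝ _ hv
  have hleM : ∀ v ∈ ExtP, dot v μ ≤ M := fun v hv => hM.2 ⟨v, hmemP v hv, rfl⟩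
  have hΔ0 : 0 < Δ := by
    obtain ⟨v, -, -, h⟩ := hΔ.1
    exact h
  have hgap : ∀ v ∈ ExtP, dot v μ ≠ M → dot v μ + Δ ≤ M := by
    intro v hv hne
    have := hΔ.2 ⟨v, hv, rfl, sub_pos.2 (lt_of_le_of_ne (hleM v hv) hne)⟩
    linarith
  have hopt : ∀ v ∈ ExtP, dot v μ = M → ∀ a, 0 < v a := fun v hv h =>
    hpstarmin v (hmemP v hv) h
  -- a linear form attains its maximum over the polytope at a point of `ExtP`
  obtain ⟨q, hq, hqM⟩ : ∃ q ∈ ExtP, dot q μ = M := by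
    obtain ⟨q, hq, hqmax⟩ := ExtP.exists_max_image (fun v => dot v μ) hExtNe
    refine ⟨q, hq, le_antisymm (hleM q hq) ?_⟩
    obtain ⟨w, hw, hwM⟩ := hM.1
    have hconv : Convex ℝ {v : Fin K → ℝ | dot v μ ≤ dot q μ} := by
      refine convex_halfSpace_le ⟨fun x y => ?_, fun r x => ?_⟩ _
      · simp [dot, add_mul, Finset.sum_add_distrib]
      · simp [dot, Finset.mul_sum, mul_assoc]
    have : w ∈ {v : Fin K → ℝ | dot v μ ≤ dot q μ} :=
      convexHull_min (fun v hv => hqmax v hv) hconv (hPset ▸ hw)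
    rw [← hwM]; exact this
  -- the smallest positive coordinate over `ExtP`
  obtain ⟨c, hc0, hc⟩ : ∃ c : ℝ, 0 < c ∧ ∀ v ∈ ExtP, ∀ a, 0 < v a → c ≤ v a := by
    let I := (ExtP ×ˢ (Finset.univ : Finset (Fin K))).filter fun x => 0 < x.1 x.2
    have hI : I.Nonempty := ⟨(q, ⟨0, hK⟩), by simp [I, hq, hopt q hq hqM]⟩
    obtain ⟨x, hx, hxmin⟩ := I.exists_min_image (fun x => x.1 x.2) hI
    exact ⟨x.1 x.2, (Finset.mem_filter.1 hx).2, fun v hv a ha => hxmin (v, a) (by simp [I, hv, ha])⟩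
  have hpP : ∀ t, 1 ≤ t → ∀ ω, (∀ a, 0 ≤ p t ω a) ∧ ∑ a, p t ω a = 1 := fun t ht ω =>
    hExtProb _ (hUCB t ht ω).1
  have hKR : (0 : ℝ) < K := by exact_mod_cast hK
  obtain ⟨r, hr⟩ : ∃ r, r = c * (1 - Real.exp (-1)) / (4 * K) := ⟨_, rfl⟩
  have hr0 : 0 < r := by
    have : Real.exp (-1) < 1 := by rw [Real.exp_lt_one_iff]; norm_num
    have : 0 < 1 - Real.exp (-1) := by linarith
    rw [hr]; positivity
  obtain ⟨k, hk⟩ := exists_nat_ge (8 / Δ ^ 2)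
  let bd : ℕ → ℝ := fun t => 16 * K * (1 / (t : ℝ) ^ 2)
    + K * Real.exp 1 * ((t : ℝ) ^ k * Real.exp (-r * t))
  have hbd : Summable bd :=
    ((Real.summable_one_div_nat_pow.2 (by norm_num)).mul_left _).add
      ((Real.summable_pow_mul_exp_neg_nat_mul k hr0).mul_left _)
  let f : ℕ → ℝ := fun t => P.real {ω | dot (p (t + 1) ω) μ ≠ M}
  have hfb : ∀ t, 4 ≤ t → f t ≤ bd t := by
    intro t ht
    have htR : (4 : ℝ) ≤ t := by exact_mod_cast ht
    have hL : 0 ≤ 8 * Real.log t / Δ ^ 2 := by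
      have := Real.log_nonneg (by linarith : (1 : ℝ) ≤ t)
      positivity
    have hss : {ω | dot (p (t + 1) ω) μ ≠ M} ⊆
        (⋃ u ∈ Finset.Icc ((t + 1) / 2) t, concFail A Y μ u) ∪
        ⋃ b ∈ (Finset.univ : Finset (Fin K)),
          {ω | (t : ℝ) / (4 * K) ≤ underCount p A c (8 * Real.log t / Δ ^ 2) b t ω} := by
      intro ω hω
      by_cases hcc : ∀ u ∈ Finset.Icc ((t + 1) / 2) t, ω ∉ concFail A Y μ u
      · obtain ⟨b, hb⟩ := exists_underCount_ge hK p A Y μ hμ01 ExtP hExtProb hΔ0 hgap hopt hc hq hqM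
          hUCB ht hω hcc
        refine Or.inr (Set.mem_iUnion₂.2 ⟨b, Finset.mem_univ _, hb⟩)
      · push Not at hcc
        exact Or.inl (Set.mem_iUnion₂.2 (by simpa using hcc))
    have h1 : P.real (⋃ u ∈ Finset.Icc ((t + 1) / 2) t, concFail A Y μ u)
        ≤ 16 * K * (1 / (t : ℝ) ^ 2) := by
      calc _ ≤ ∑ u ∈ Finset.Icc ((t + 1) / 2) t, P.real (concFail A Y μ u) :=
            measureReal_biUnion_finset_le _ _
        _ ≤ ∑ u ∈ Finset.Icc ((t + 1) / 2) t, 2 * K / ((t : ℝ) / 2) ^ 3 := by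
            refine Finset.sum_le_sum fun u hu => ?_
            have hu' := Finset.mem_Icc.1 hu
            refine (measureReal_concFail_le P ν hνprob hνsupp μ hμ A Y hA hY hreward
              (by omega)).trans ?_
            have : (t : ℝ) ≤ 2 * u := by exact_mod_cast (by omega : t ≤ 2 * u)
            have : (t : ℝ) / 2 ≤ u := by linarith
            gcongr
        _ ≤ t * (2 * K / ((t : ℝ) / 2) ^ 3) := by
            simp only [Finset.sum_const, Nat.card_Icc, nsmul_eq_mul]
            have : ((t + 1 - (t + 1) / 2 : ℕ) : ℝ) ≤ t := by
              exact_mod_cast (by omega : t + 1 - (t + 1) / 2 ≤ t)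
            gcongr
        _ = _ := by field_simp; ring
    have h2 : P.real (⋃ b ∈ (Finset.univ : Finset (Fin K)),
          {ω | (t : ℝ) / (4 * K) ≤ underCount p A c (8 * Real.log t / Δ ^ 2) b t ω})
        ≤ K * Real.exp 1 * ((t : ℝ) ^ k * Real.exp (-r * t)) := by
      calc _ ≤ ∑ b : Fin K, P.real
              {ω | (t : ℝ) / (4 * K) ≤ underCount p A c (8 * Real.log t / Δ ^ 2) b t ω} :=
            measureReal_biUnion_finset_le _ _
        _ ≤ ∑ b : Fin K, Real.exp 1 * ((t : ℝ) ^ k * Real.exp (-r * t)) := by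
            refine Finset.sum_le_sum fun b _ => ?_
            refine (measureReal_underCount_ge_le P p A Y hA hY hpmeas hpP harm c _ hc0 hL b t
              _).trans ?_
            have e1 : (t : ℝ) ^ k = Real.exp (k * Real.log t) := by
              rw [Real.exp_nat_mul, Real.exp_log (by linarith)]
            rw [e1, ← Real.exp_add, ← Real.exp_add]
            refine Real.exp_le_exp.2 ?_
            have e2 : c * (1 - Real.exp (-1)) * ((t : ℝ) / (4 * K)) = r * t := by
              rw [hr]; ring
            have e3 : 8 * Real.log t / Δ ^ 2 ≤ k * Real.log t := by
              have := mul_le_mul_of_nonneg_right hk (Real.log_nonneg (by linarith : (1 : ℝ) ≤ t))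
              refine le_trans (le_of_eq ?_) this
              ring
            rw [e2]
            linarith
        _ = _ := by simp; ring
    calc f t ≤ _ := measureReal_mono hss (measure_ne_top _ _)
      _ ≤ _ := measureReal_union_le _ _
      _ ≤ bd t := add_le_add h1 h2
  have hf : Summable f := by
    refine Summable.of_norm_bounded_eventually_nat hbd ?_
    filter_upwards [Filter.eventually_ge_atTop 4] with t ht
    rw [Real.norm_of_nonneg measureReal_nonneg]
    exact hfb t ht
  refine ⟨∑' t, f t, fun T => ?_⟩
  have hdotm : ∀ t, 1 ≤ t → Measurable fun ω => dot (p t ω) μ := by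
    intro t ht
    refine Finset.measurable_fun_sum _ fun a _ => Measurable.mul_const ?_ _
    exact (measurable_pi_apply a).comp ((hpmeas t ht).mono (hist_le hA hY _) le_rfl)
  have hdot01 : ∀ v ∈ ExtP, 0 ≤ dot v μ ∧ dot v μ ≤ 1 := by
    intro v hv
    obtain ⟨h0, h1⟩ := hExtProb v hv
    refine ⟨Finset.sum_nonneg fun a _ => mul_nonneg (h0 a) (hμ01 a).1, ?_⟩
    rw [← h1]
    exact Finset.sum_le_sum fun a _ => mul_le_of_le_one_right (h0 a) (hμ01 a).2
  have hdoti : ∀ t, 1 ≤ t → Integrable (fun ω => dot (p t ω) μ) P := fun t ht =>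
    Integrable.of_mem_Icc 0 1 (hdotm t ht).aemeasurable
      (ae_of_all _ fun ω => hdot01 _ (hUCB t ht ω).1)
  have hone : ∀ t, 1 ≤ t → M - ∫ ω, dot (p t ω) μ ∂P ≤ P.real {ω | dot (p t ω) μ ≠ M} := by
    intro t ht
    have hms : MeasurableSet {ω | dot (p t ω) μ ≠ M} :=
      (hdotm t ht (measurableSet_singleton M)).compl
    calc M - ∫ ω, dot (p t ω) μ ∂P = ∫ ω, (M - dot (p t ω) μ) ∂P := by
          rw [integral_sub (integrable_const _) (hdoti t ht)]; simp
      _ ≤ ∫ ω, ({ω | dot (p t ω) μ ≠ M}).indicator (fun _ => (1 : ℝ)) ω ∂P := by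
          refine integral_mono ((integrable_const _).sub (hdoti t ht))
            ((integrable_const _).indicator hms) fun ω => ?_
          by_cases h : dot (p t ω) μ = M
          · simp [h]
          · have h1 := (hdot01 _ (hUCB t ht ω).1).1
            have h2 := (hdot01 q hq).2
            simp [h]
            linarith
      _ = _ := integral_indicator_one hms
  rw [integral_finsetSum _ fun t ht => hdoti t (Finset.mem_Icc.1 ht).1]
  calc T * M - ∑ t ∈ Finset.Icc 1 T, ∫ ω, dot (p t ω) μ ∂P
      = ∑ t ∈ Finset.Icc 1 T, (M - ∫ ω, dot (p t ω) μ ∂P) := by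
        rw [Finset.sum_sub_distrib]; simp
    _ ≤ ∑ t ∈ Finset.Icc 1 T, P.real {ω | dot (p t ω) μ ≠ M} :=
        Finset.sum_le_sum fun t ht => hone t (Finset.mem_Icc.1 ht).1
    _ = ∑ t ∈ Finset.range T, f t := by
        rw [Finset.range_eq_Ico, Finset.sum_Ico_add' (fun t => P.real {ω | dot (p t ω) μ ≠ M}) 0 T 1]
        rfl
    _ ≤ ∑' t, f t := hf.sum_le_tsum _ fun t _ => measureReal_nonneg

end DivBanditUCB
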